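/- Let n, l be positive integers and p a prime such that p^l divides n but p^{l+1} does not divide n, and let S be a subset of Z_n with 0 ∉ S, S = −S, and |S| = p^l − 1. If the circulant graph Cay(Z_n, S) admits a perfect code, then for every j ∈ {1, 2, …, l}, the p^j-th cyclotomic polynomial λ_{p^j}(x) divides the polynomial f_{S∪{0}}(x) in Z[x]. -/

import Mathlib

open Polynomial

/-- The circulant graph `Cay(Z_n, S)`: vertices are `ZMod n`, and `u, v` are adjacent
iff `v - u ∈ S` (here symmetrised; when `S = -S` this agrees with the usual definition). -/
def circulantGraph (n : ℕ) (S : Finset (ZMod n)) : SimpleGraph (ZMod n) :=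
  SimpleGraph.fromRel (fun u v => v - u ∈ S)

/-- `C` is a perfect code in `G`: an independent set such that every vertex outside `C`
is adjacent to exactly one vertex of `C`. -/
def IsPerfectCode {V : Type*} (G : SimpleGraph V) (C : Set V) : Prop :=
  (∀ u ∈ C, ∀ v ∈ C, ¬ G.Adj u v) ∧ ∀ v, v ∉ C → ∃! c, c ∈ C ∧ G.Adj v c

/-- `C` is a total perfect code in `G`: every vertex is adjacent to exactly one vertex of `C`. -/
def IsTotalPerfectCode {V : Type*} (G : SimpleGraph V) (C : Set V) : Prop :=
  ∀ v, ∃! c, c ∈ C ∧ G.Adj v c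

/-- **Claim 3** in the proof of Theorem 1.2: if `p^l ∥ n`, `|S| = p^l - 1`, and `Cay(Z_n, S)`
admits a perfect code, then `λ_{p^j}(x)` divides `f_{S∪{0}}(x)` for every `j ∈ {1, …, l}`. -/
theorem cyclotomic_primePow_dvd_fS_of_perfectCode
    (n l : ℕ) (hn : 0 < n) (hl : 0 < l) (p : ℕ) (hp : p.Prime)
    (hdvd : p ^ l ∣ n) (hndvd : ¬ p ^ (l + 1) ∣ n)
    (S : Finset (ZMod n)) (h0S : (0 : ZMod n) ∉ S) (hSneg : ∀ s ∈ S, -s ∈ S)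
    (hcard : S.card = p ^ l - 1)
    (hex : ∃ C : Set (ZMod n), IsPerfectCode (circulantGraph n S) C) :
    ∀ j : ℕ, 1 ≤ j → j ≤ l →
      Polynomial.cyclotomic (p ^ j) ℤ ∣ ∑ s ∈ insert (0 : ZMod n) S, (X : ℤ[X]) ^ s.val := by
  classical
  haveI : NeZero n := ⟨hn.ne'⟩
  haveI : Fact p.Prime := ⟨hp⟩
  obtain ⟨C, hind, hdom⟩ := hex
  intro j hj1 hjl
  have hadj : ∀ v c : ZMod n, (circulantGraph n S).Adj v c ↔ v - c ∈ S := by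
    intro v c
    simp only [circulantGraph, SimpleGraph.fromRel_adj]
    constructor
    · rintro ⟨_, h | h⟩
      · simpa using hSneg _ h
      · exact h
    · intro h
      refine ⟨?_, Or.inr h⟩
      rintro rfl
      exact h0S (by simpa using h)
  set D : Finset (ZMod n) := Finset.univ.filter (fun c => c ∈ C) with hD
  have hDm : ∀ c, c ∈ D ↔ c ∈ C := by intro c; simp [hD]
  set T : Finset (ZMod n) := insert (0 : ZMod n) S with hT
  have hTm : ∀ s, s ∈ T ↔ s = 0 ∨ s ∈ S := by intro c; simp [hT]
  have hTcard : T.card = p ^ l := by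
    rw [hT, Finset.card_insert_of_notMem h0S, hcard]
    have : 0 < p ^ l := pow_pos hp.pos l
    omega
  -- a point of the code only has the trivial decomposition
  have key : ∀ s ∈ T, ∀ c ∈ D, s + c ∈ C → s = 0 := by
    intro s hs c hc hsc
    rcases (hTm s).1 hs with h | h
    · exact h
    · exact absurd ((hadj (s + c) c).2 (by simpa using h)) (hind _ hsc _ ((hDm c).1 hc))
  have hinj : Set.InjOn (fun x : ZMod n × ZMod n => x.1 + x.2) (T ×ˢ D : Finset (ZMod n × ZMod n)) := by
    rintro ⟨s, c⟩ h1 ⟨s', c'⟩ h2 h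
    simp only [Finset.mem_coe, Finset.mem_product] at h1 h2 h
    have hcc : c = c' := by
      by_cases hv : s + c ∈ C
      · have e1 := key s h1.1 c h1.2 hv
        have e2 := key s' h2.1 c' h2.2 (h ▸ hv)
        subst e1 e2
        simpa using h
      · refine (hdom _ hv).unique ⟨(hDm c).1 h1.2, (hadj _ _).2 ?_⟩ ⟨(hDm c').1 h2.2, (hadj _ _).2 ?_⟩
        · rcases (hTm s).1 h1.1 with e | e
          · exact absurd (by simpa [e] using (hDm c).1 h1.2) hv
          · simpa using e
        · rw [h] at hv ⊢
          rcases (hTm s').1 h2.1 with e | e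
          · exact absurd (by simpa [e] using (hDm c').1 h2.2) hv
          · simpa using e
    subst hcc
    simpa using h
  have himg : (T ×ˢ D).image (fun x : ZMod n × ZMod n => x.1 + x.2) = Finset.univ := by
    ext v
    simp only [Finset.mem_image, Finset.mem_product, Finset.mem_univ, iff_true, Prod.exists]
    by_cases hv : v ∈ C
    · exact ⟨0, v, ⟨(hTm 0).2 (Or.inl rfl), (hDm v).2 hv⟩, by simp⟩
    · obtain ⟨c, ⟨hc, ha⟩, _⟩ := hdom v hv
      exact ⟨v - c, c, ⟨(hTm _).2 (Or.inr ((hadj v c).1 ha)), (hDm c).2 hc⟩, by simp⟩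
  have hnc : p ^ l * D.card = n := by
    rw [← hTcard, ← Finset.card_product, ← Finset.card_image_of_injOn hinj, himg, Finset.card_univ,
      ZMod.card]
  have hpD : ¬ p ∣ D.card := by
    rintro ⟨k, hk⟩
    exact hndvd ⟨k, by rw [← hnc, hk]; ring⟩
  have hpj : 0 < p ^ j := pow_pos hp.pos j
  have hprim : IsPrimitiveRoot (Complex.exp (2 * Real.pi * Complex.I / (p ^ j : ℕ))) (p ^ j) :=
    Complex.isPrimitiveRoot_exp _ hpj.ne'
  generalize Complex.exp (2 * Real.pi * Complex.I / (p ^ j : ℕ)) = ζ at hprim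
  have hζn : ζ ^ n = 1 := (hprim.pow_eq_one_iff_dvd n).2 ((pow_dvd_pow p hjl).trans hdvd)
  have hζ1 : ζ ≠ 1 := hprim.ne_one (Nat.one_lt_pow (by omega) hp.one_lt)
  have hsum : ∑ v : ZMod n, ζ ^ v.val = 0 := by
    have : ∑ v : ZMod n, ζ ^ v.val = ∑ i ∈ Finset.range n, ζ ^ i := by
      refine Finset.sum_bij (fun v _ => v.val) ?_ ?_ ?_ ?_
      · intro v _; exact Finset.mem_range.2 (ZMod.val_lt v)
      · intro a _ b _ h; exact ZMod.val_injective n h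
      · intro b hb
        exact ⟨(b : ZMod n), Finset.mem_univ _, ZMod.val_cast_of_lt (Finset.mem_range.1 hb)⟩
      · intros; rfl
    rw [this, geom_sum_eq hζ1, hζn]; simp
  have hprod : (∑ s ∈ T, ζ ^ s.val) * (∑ c ∈ D, ζ ^ c.val) = 0 := by
    rw [← hsum, ← himg, Finset.sum_image hinj, Finset.sum_mul_sum, ← Finset.sum_product']
    refine Finset.sum_congr rfl fun x _ => ?_
    rw [ZMod.val_add, ← pow_eq_pow_mod _ hζn, pow_add]
  have hdiv : ∀ A : Finset (ZMod n), ∑ s ∈ A, ζ ^ s.val = 0 →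
      Polynomial.cyclotomic (p ^ j) ℤ ∣ ∑ s ∈ A, (X : ℤ[X]) ^ s.val := by
    intro A hA
    rw [Polynomial.cyclotomic_eq_minpoly hprim hpj]
    refine minpoly.isIntegrallyClosed_dvd (hprim.isIntegral hpj) ?_
    simpa using hA
  rcases mul_eq_zero.1 hprod with h | h
  · exact hdiv T h
  · exfalso
    have h1 := Polynomial.eval_dvd (x := 1) (hdiv D h)
    obtain ⟨k, rfl⟩ : ∃ k, j = k + 1 := ⟨j - 1, by omega⟩
    rw [Polynomial.eval_one_cyclotomic_prime_pow] at h1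
    simp only [Polynomial.eval_finset_sum, Polynomial.eval_pow, Polynomial.eval_X, one_pow,
      Finset.sum_const, nsmul_eq_mul, mul_one] at h1
    exact hpD (by exact_mod_cast h1)
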